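/- arXiv:1908.05456 — 2 statements merged into one kernel-verified Lean document; each statement's English description precedes it below -/
import Mathlib

section
/- Let K be the group with presentation ⟨x, y | x² = y³ = [x,y]³ = 1⟩, and let K'' denote its second derived subgroup (the derived subgroup of the derived subgroup). Then K'' has index 54 in K and K'' is isomorphic to ℤ × ℤ (the direct product of two infinite cyclic groups). -/
/-- The relators `x²`, `y³`, `[x,y]³` in the free group on two generators. -/
def rels18 : Set (FreeGroup (Fin 2)) :=
  { (FreeGroup.of 0) ^ 2, (FreeGroup.of 1) ^ 3,
    ((FreeGroup.of 0)⁻¹ * (FreeGroup.of 1)⁻¹ * FreeGroup.of 0 * FreeGroup.of 1) ^ 3 }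

/-- `K = ⟨x, y ∣ x² = y³ = [x,y]³ = 1⟩`. -/
abbrev K18 : Type := PresentedGroup rels18

/-!
Put `ω = exp (2πi/3)`. In `K` the commutator `ρ = [x,y]` and the involution `x` generate a dihedral
group of order six, and `y⁻¹ = (yx)²ρ`. The elements `(yx)²` and `(xy)²` commute, and `ρ` and
`x` act on them as multiplication by `ω` and the reflection `z ↦ ω * conj z` act on the translations
by `1` and `ω`, so `K` is the wallpaper group `ℤ[ω] ⋊ D₃` of type `p31m`.

In `(M ⊗ ℤ[ω]) ⋊ D₃`, for any abelian `M`, the second derived subgroup is `3(M ⊗ ℤ[ω])`. It contains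
this because `3 = (1 - ω)(1 - ω⁻¹)` makes `3v` an iterated commutator. It is no larger because, once
`3M = 0`, the translations in the derived subgroup are multiples of `1 - ω`, which `ω` fixes, so the
derived subgroup is abelian. For `M = ℤ` the index is `3² · 6 = 54`.
-/

open DihedralGroup SemidirectProduct
open scoped commutatorElement

section Dihedral

variable {n : ℕ} {G : Type*} [Group G]

theorem zpow_eq_zpow_of_intCast_eq {a : G} (ha : a ^ n = 1) {k l : ℤ}
    (h : (k : ZMod n) = l) : a ^ k = a ^ l :=
  zpow_eq_zpow_iff_modEq.mpr <| ((ZMod.intCast_eq_intCast_iff _ _ _).mp h).of_dvd <|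
    Int.natCast_dvd_natCast.mpr (orderOf_dvd_of_pow_eq_one ha)

/-- The universal property of the dihedral group of order `2n`: the homomorphism sending `r 1` to
`a` and `sr 0` to `b`. -/
def dihedralLift (a b : G) (ha : a ^ n = 1) (hb : b * b = 1) (hab : b * a * b⁻¹ = a⁻¹) :
    DihedralGroup n →* G :=
  MonoidHom.mk'
    (fun
      | r i => a ^ (i.cast : ℤ)
      | sr i => b * a ^ (i.cast : ℤ))
    (by
      have hadd (i j : ZMod n) :
          a ^ ((i + j).cast : ℤ) = a ^ (i.cast : ℤ) * a ^ (j.cast : ℤ) := by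
        rw [← zpow_add]
        exact zpow_eq_zpow_of_intCast_eq ha (by simp)
      have hsub (i j : ZMod n) :
          a ^ ((i - j).cast : ℤ) = (a ^ (j.cast : ℤ))⁻¹ * a ^ (i.cast : ℤ) := by
        rw [eq_inv_mul_iff_mul_eq, ← hadd, add_sub_cancel]
      have hswap (k : ℤ) : a ^ k * b = b * (a ^ k)⁻¹ := by
        rw [← inv_zpow, ← hab, conj_zpow, ← mul_assoc, ← mul_assoc, hb, one_mul,
          inv_eq_of_mul_eq_one_left hb]
      rintro (i | i) (j | j)
      · exact hadd i j
      · simp only [r_mul_sr, hsub, ← mul_assoc, hswap]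
      · simp only [sr_mul_r, hadd, mul_assoc]
      · simp only [sr_mul_sr, hsub]
        rw [mul_assoc, ← mul_assoc _ b, hswap, mul_assoc, ← mul_assoc b, hb, one_mul])

variable {a b : G} {ha : a ^ n = 1} {hb : b * b = 1} {hab : b * a * b⁻¹ = a⁻¹}

theorem dihedralLift_r (i : ZMod n) : dihedralLift a b ha hb hab (r i) = a ^ (i.cast : ℤ) :=
  rfl

theorem dihedralLift_sr (i : ZMod n) : dihedralLift a b ha hb hab (sr i) = b * a ^ (i.cast : ℤ) :=
  rfl

@[simp]
theorem dihedralLift_r_one : dihedralLift a b ha hb hab (r 1) = a := by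
  rw [dihedralLift_r, zpow_eq_zpow_of_intCast_eq (l := 1) ha (by simp), zpow_one]

@[simp]
theorem dihedralLift_sr_zero : dihedralLift a b ha hb hab (sr 0) = b := by
  simp [dihedralLift_sr]

theorem closure_r_one_sr_zero (n : ℕ) :
    Subgroup.closure {r 1, sr 0} = (⊤ : Subgroup (DihedralGroup n)) := by
  set C := Subgroup.closure {r 1, sr (0 : ZMod n)}
  have hr (i : ZMod n) : r i ∈ C := by
    have h : r 1 ∈ C := Subgroup.subset_closure (Set.mem_insert _ _)
    simpa [r_one_zpow] using zpow_mem h (i.cast : ℤ)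
  have hs : sr 0 ∈ C := Subgroup.subset_closure (Set.mem_insert_of_mem _ rfl)
  refine eq_top_iff.mpr ?_
  rintro (i | i) -
  · exact hr i
  · simpa using mul_mem hs (hr i)

end Dihedral

section SemidirectProduct

variable {N G H : Type*} [Group N] [Group G] [Group H] {φ : G →* MulAut N}

theorem commutatorElement_inl_inr (n : N) (g : G) :
    ⁅(inl n : N ⋊[φ] G), (inr g : N ⋊[φ] G)⁆ = inl (n / φ g n) := by
  rw [commutatorElement_def, div_eq_mul_inv, map_mul, map_inv, inl_aut]
  simp only [map_inv]; group

theorem map_aut_eq_conj_of_closure_eq_top {s : Set G} (hs : Subgroup.closure s = ⊤)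
    {fn : N →* H} {fg : G →* H} (h : ∀ g ∈ s, ∀ n, fn (φ g n) = fg g * fn n * (fg g)⁻¹)
    (g : G) (n : N) : fn (φ g n) = fg g * fn n * (fg g)⁻¹ := by
  induction hs ▸ Subgroup.mem_top g using Subgroup.closure_induction generalizing n with
  | mem g hg => exact h g hg n
  | one => simp
  | mul g₁ g₂ _ _ h₁ h₂ => simp only [map_mul, MulAut.mul_apply, h₁, h₂, mul_inv_rev, mul_assoc]
  | inv g _ hg =>
    have := hg (φ g⁻¹ n)
    rw [map_inv, MulAut.apply_inv_self] at this
    rw [map_inv, map_inv, this]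
    group

end SemidirectProduct

section Hexagonal

variable (M : Type*) [CommGroup M]

/-- Multiplication by `ω = exp (2πi/3)` on `M × M`, read as `M ⊗ ℤ[ω]` in the basis `1`, `ω`. -/
@[simps apply]
def hexRotation : MulAut (M × M) where
  toFun v := (v.2⁻¹, v.1 / v.2)
  invFun v := (v.2 / v.1, v.1⁻¹)
  left_inv v := by simp
  right_inv v := by simp
  map_mul' v w := by simp [mul_comm, mul_div_mul_comm]

/-- The action of the dihedral group of order six on `M × M = M ⊗ ℤ[ω]`: `r 1` is multiplication
by `ω` and `sr 0` is the reflection `z ↦ ω * conj z`, which swaps `1` and `ω`. -/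
def hexAction : DihedralGroup 3 →* MulAut (M × M) :=
  dihedralLift (hexRotation M) MulEquiv.prodComm
    (by ext v <;> simp [pow_three, div_div_eq_mul_div])
    (by ext v <;> rfl)
    (by ext v <;> rfl)

/-- The semidirect product `(M ⊗ ℤ[ω]) ⋊ D₃`; for `M = ℤ` it is the wallpaper group `p31m`. -/
abbrev HexagonalGroup : Type _ := (M × M) ⋊[hexAction M] DihedralGroup 3

variable {M}

theorem hexRotation_inv_mul_hexRotation (v : M × M) :
    (hexRotation M)⁻¹ v * hexRotation M v = v⁻¹ := by
  change (v.2 / v.1, v.1⁻¹) * (v.2⁻¹, v.1 / v.2) = v⁻¹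
  ext <;> simp [div_eq_mul_inv]

@[simp]
theorem hexAction_r_one : hexAction M (r 1) = hexRotation M :=
  dihedralLift_r_one

@[simp]
theorem hexAction_sr_zero (v : M × M) : hexAction M (sr 0) v = v.swap :=
  DFunLike.congr_fun dihedralLift_sr_zero v

theorem hexAction_r_apply_eq_self (hM : ∀ m : M, m ^ 3 = 1) {v : M × M} (hv : v.1 * v.2 = 1)
    (i : ZMod 3) : hexAction M (r i) v = v := by
  have hfst : v.2⁻¹ = v.1 := (eq_inv_of_mul_eq_one_left hv).symm
  have hsnd : v.1 / v.2 = v.2 := by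
    rw [← hfst, div_eq_mul_inv, ← mul_inv, inv_eq_iff_mul_eq_one, ← pow_three', hM]
  have hrot : hexRotation M ∈ MulAction.stabilizer (MulAut (M × M)) v := Prod.ext hfst hsnd
  exact zpow_mem hrot _

namespace HexagonalGroup

section Lift

variable {G : Type*} [Group G]

/-- Homomorphisms out of `HexagonalGroup M`; compatibility with the action need only be checked on
the generators of the dihedral group. -/
def lift (fn : M × M →* G) (fg : DihedralGroup 3 →* G)
    (hr : ∀ v, fn (v.2⁻¹, v.1 / v.2) = fg (r 1) * fn v * (fg (r 1))⁻¹)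
    (hs : ∀ v, fn v.swap = fg (sr 0) * fn v * (fg (sr 0))⁻¹) : HexagonalGroup M →* G :=
  SemidirectProduct.lift fn fg fun g ↦ by
    ext1 v
    refine map_aut_eq_conj_of_closure_eq_top (closure_r_one_sr_zero 3) ?_ g v
    rintro _ (rfl | rfl) v
    · rw [hexAction_r_one, hexRotation_apply, hr]
    · rw [hexAction_sr_zero, hs]

variable {fn : M × M →* G} {fg : DihedralGroup 3 →* G}
  {hr : ∀ v, fn (v.2⁻¹, v.1 / v.2) = fg (r 1) * fn v * (fg (r 1))⁻¹}
  {hs : ∀ v, fn v.swap = fg (sr 0) * fn v * (fg (sr 0))⁻¹}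

@[simp]
theorem lift_inl (v : M × M) : lift fn fg hr hs (inl v) = fn v :=
  SemidirectProduct.lift_inl ..

@[simp]
theorem lift_inr (g : DihedralGroup 3) : lift fn fg hr hs (inr g) = fg g :=
  SemidirectProduct.lift_inr ..

theorem lift_apply (x : HexagonalGroup M) : lift fn fg hr hs x = fn x.left * fg x.right :=
  rfl

end Lift

/-- Functoriality of `HexagonalGroup M` in `M`, used for reduction modulo cubes. -/
def map {N : Type*} [CommGroup N] (f : M →* N) : HexagonalGroup M →* HexagonalGroup N :=
  lift (inl.comp (f.prodMap f)) inr
    (fun v ↦ by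
      rw [← map_inv, MonoidHom.comp_apply, MonoidHom.comp_apply, ← inl_aut, hexAction_r_one]
      simp)
    (fun v ↦ by
      rw [← map_inv, MonoidHom.comp_apply, MonoidHom.comp_apply, ← inl_aut, hexAction_sr_zero]
      rfl)

theorem map_apply {N : Type*} [CommGroup N] (f : M →* N) (x : HexagonalGroup M) :
    map f x = ⟨(f x.left.1, f x.left.2), x.right⟩ :=
  (mk_eq_inl_mul_inr _ _).symm

theorem exists_right_eq_r_of_mem_commutator {x : HexagonalGroup M}
    (hx : x ∈ commutator (HexagonalGroup M)) : ∃ i, x.right = r i := by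
  let sign : DihedralGroup 3 →* ℤˣ := dihedralLift 1 (-1) (by simp) (by simp) (by simp)
  have hsign : sign x.right = 1 := Abelianization.commutator_subset_ker (sign.comp rightHom) hx
  generalize x.right = g at hsign ⊢
  obtain i | i := g
  · exact ⟨i, rfl⟩
  · simp [sign, dihedralLift_sr] at hsign

theorem left_fst_mul_left_snd_of_mem_commutator (hM : ∀ m : M, m ^ 3 = 1)
    {x : HexagonalGroup M} (hx : x ∈ commutator (HexagonalGroup M)) : x.left.1 * x.left.2 = 1 := by
  have hinv (b : M) : b⁻¹ * b⁻¹ = b := by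
    rw [← mul_inv, inv_eq_iff_mul_eq_one, ← pow_three', hM]
  let coordProd : HexagonalGroup M →* M := lift mulMonoidHom 1
    (fun v ↦ by simp [div_eq_mul_inv, mul_left_comm, hinv])
    (fun v ↦ by simp [mul_comm])
  simpa [coordProd, lift_apply] using Abelianization.commutator_subset_ker coordProd hx

theorem derivedSeries_two_eq_bot (hM : ∀ m : M, m ^ 3 = 1) :
    derivedSeries (HexagonalGroup M) 2 = ⊥ := by
  rw [derivedSeries_succ, derivedSeries_one, eq_bot_iff, Subgroup.commutator_le]
  intro x hx y hy
  obtain ⟨i, hi⟩ := exists_right_eq_r_of_mem_commutator hx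
  obtain ⟨j, hj⟩ := exists_right_eq_r_of_mem_commutator hy
  have hxy (i : ZMod 3) : hexAction M (r i) x.left = x.left :=
    hexAction_r_apply_eq_self hM (left_fst_mul_left_snd_of_mem_commutator hM hx) i
  have hyx (i : ZMod 3) : hexAction M (r i) y.left = y.left :=
    hexAction_r_apply_eq_self hM (left_fst_mul_left_snd_of_mem_commutator hM hy) i
  rw [Subgroup.mem_bot, commutatorElement_eq_one_iff_mul_comm]
  ext1
  · rw [mul_left, mul_left, hi, hj, hxy, hyx, mul_comm]
  · rw [mul_right, mul_right, hi, hj, r_mul_r, r_mul_r, add_comm]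

theorem inl_pow_three_mem_derivedSeries_two (v : M × M) :
    inl (v ^ 3) ∈ derivedSeries (HexagonalGroup M) 2 := by
  set ρ := hexAction M (r 1) with hρ
  have hleft : inl (v / ρ⁻¹ v) ∈ derivedSeries (HexagonalGroup M) 1 := by
    rw [hρ, ← map_inv, ← commutatorElement_inl_inr]
    exact Subgroup.commutator_mem_commutator (Subgroup.mem_top _) (Subgroup.mem_top _)
  have hright : inr (r 1) ∈ derivedSeries (HexagonalGroup M) 1 := by
    have hr : (r 1 : DihedralGroup 3) = ⁅(r 2 : DihedralGroup 3), sr 0⁆ := by decide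
    rw [hr, map_commutatorElement]
    exact Subgroup.commutator_mem_commutator (Subgroup.mem_top _) (Subgroup.mem_top _)
  -- In `ℤ[ω]` this is the factorisation `3 = (1 - ω) * (1 - ω⁻¹)`.
  have hcube : v ^ 3 = v / ρ⁻¹ v / ρ (v / ρ⁻¹ v) := by
    rw [map_div, MulAut.apply_inv_self, div_div_eq_mul_div, div_mul_eq_mul_div, div_div,
      hρ, hexAction_r_one, hexRotation_inv_mul_hexRotation, div_inv_eq_mul, pow_three']
  rw [hcube, hρ, ← commutatorElement_inl_inr]
  exact Subgroup.commutator_mem_commutator hleft hright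

theorem derivedSeries_two_eq_range (M : Type*) [CommGroup M] :
    derivedSeries (HexagonalGroup M) 2 = (inl.comp (powMonoidHom 3)).range := by
  apply le_antisymm
  · intro x hx
    let f := QuotientGroup.mk' (powMonoidHom 3 : M →* M).range
    have hQ (q : M ⧸ (powMonoidHom 3 : M →* M).range) : q ^ 3 = 1 := by
      obtain ⟨m, rfl⟩ := QuotientGroup.mk_surjective q
      exact (QuotientGroup.eq_one_iff _).mpr ⟨m, rfl⟩
    have hfx : map f x = 1 := by
      have := map_derivedSeries_le_derivedSeries (map f) 2 (Subgroup.mem_map_of_mem _ hx)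
      rwa [derivedSeries_two_eq_bot hQ, Subgroup.mem_bot] at this
    rw [map_apply, SemidirectProduct.ext_iff, Prod.ext_iff] at hfx
    obtain ⟨⟨hfst, hsnd⟩, hright⟩ := hfx
    obtain ⟨a, ha⟩ := (QuotientGroup.eq_one_iff _).mp hfst
    obtain ⟨b, hb⟩ := (QuotientGroup.eq_one_iff _).mp hsnd
    exact ⟨(a, b), SemidirectProduct.ext (Prod.ext ha hb) hright.symm⟩
  · rintro _ ⟨v, rfl⟩
    exact inl_pow_three_mem_derivedSeries_two v

theorem index_derivedSeries_two (M : Type*) [CommGroup M] :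
    (derivedSeries (HexagonalGroup M) 2).index = (powMonoidHom 3 : M →* M).range.index ^ 2 * 6 := by
  have hprod : (powMonoidHom 3 : M × M →* M × M).range =
      (powMonoidHom 3 : M →* M).range.prod (powMonoidHom 3 : M →* M).range :=
    MonoidHom.range_prodMap (powMonoidHom 3 : M →* M) (powMonoidHom 3 : M →* M)
  have hinl : (inl : M × M →* HexagonalGroup M).range.index = 6 := by
    rw [range_inl_eq_ker_rightHom, Subgroup.index_ker,
      MonoidHom.range_eq_top.mpr rightHom_surjective, Subgroup.card_top, nat_card]
  rw [derivedSeries_two_eq_range, MonoidHom.range_comp,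
    Subgroup.index_map_of_injective _ inl_injective, hinl, hprod, Subgroup.index_prod, sq]

theorem inl_comp_powMonoidHom_injective (M : Type*) [CommGroup M] [IsMulTorsionFree M] :
    Function.Injective ((inl : M × M →* HexagonalGroup M).comp (powMonoidHom 3)) :=
  inl_injective.comp (pow_left_injective three_ne_zero)

/-- For torsion-free `M`, the isomorphism of `M × M` with its subgroup of cubes. -/
noncomputable def derivedSeriesTwoEquiv (M : Type*) [CommGroup M] [IsMulTorsionFree M] :
    derivedSeries (HexagonalGroup M) 2 ≃* M × M :=
  (MulEquiv.subgroupCongr (derivedSeries_two_eq_range M)).trans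
    (MonoidHom.ofInjective (inl_comp_powMonoidHom_injective M)).symm

/-- The reflection `z ↦ ω * conj z`, which corresponds to the generator `x` of `K18`. -/
def reflection : HexagonalGroup M :=
  inr (sr 0)

/-- The rotation `z ↦ ω⁻¹ * (z - m)` of order three; for `m = 1` it corresponds to the generator `y`
of `K18`. -/
def affineRotation (m : M) : HexagonalGroup M :=
  (inl (m, 1) * inr (r 1))⁻¹

end HexagonalGroup

end Hexagonal

section MultiplicativeInt

theorem index_range_powMonoidHom_multiplicative_int (n : ℕ) :
    (powMonoidHom n : Multiplicative ℤ →* Multiplicative ℤ).range.index = n := by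
  have hpow : powMonoidHom n = zpowersHom (Multiplicative ℤ) (.ofAdd n) := by ext; simp
  rw [hpow, Subgroup.range_zpowersHom]
  exact Int.index_zmultiples n

theorem hom_ext_prod_multiplicative_int {P : Type*} [Monoid P]
    {f g : Multiplicative ℤ × Multiplicative ℤ →* P} (hfst : f (.ofAdd 1, 1) = g (.ofAdd 1, 1))
    (hsnd : f (1, .ofAdd 1) = g (1, .ofAdd 1)) : f = g := by
  have hinl : f.comp (.inl _ _) = g.comp (.inl _ _) := MonoidHom.ext_mint hfst
  have hinr : f.comp (.inr _ _) = g.comp (.inr _ _) := MonoidHom.ext_mint hsnd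
  rw [← f.noncommCoprod_unique, ← g.noncommCoprod_unique]
  simp only [hinl, hinr]

end MultiplicativeInt

section Presentation

variable {G : Type*} [Group G]

theorem conj_mul_swap_pow (x y : G) (n : ℕ) : x * (y * x) ^ n * x⁻¹ = (x * y) ^ n := by
  rw [← conj_pow, ← mul_assoc, mul_inv_cancel_right]

/-- The pairs satisfying the defining relations of `K18`. Since `⁅g, h⁆` means
`g * h * g⁻¹ * h⁻¹`, the relator `[x,y] = x⁻¹y⁻¹xy` is `⁅x⁻¹, y⁻¹⁆`. -/
structure IsHexagonalPair (x y : G) : Prop where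
  sq_eq_one : x ^ 2 = 1
  cube_eq_one : y ^ 3 = 1
  commutator_cube_eq_one : ⁅x⁻¹, y⁻¹⁆ ^ 3 = 1

namespace IsHexagonalPair

variable {x y : G}

theorem mul_self_eq_one (h : IsHexagonalPair x y) : x * x = 1 := by
  rw [← sq, h.sq_eq_one]

theorem inv_eq_self (h : IsHexagonalPair x y) : x⁻¹ = x :=
  inv_eq_of_mul_eq_one_left h.mul_self_eq_one

theorem mul_self_eq_inv (h : IsHexagonalPair x y) : y * y = y⁻¹ :=
  eq_inv_of_mul_eq_one_left (by rw [← pow_three', h.cube_eq_one])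

theorem inv_mul_self_inv (h : IsHexagonalPair x y) : y⁻¹ * y⁻¹ = y := by
  rw [← mul_inv_rev, h.mul_self_eq_inv, inv_inv]

theorem yx_sq_mul_commutator (h : IsHexagonalPair x y) : (y * x) ^ 2 * ⁅x⁻¹, y⁻¹⁆ = y⁻¹ := by
  calc (y * x) ^ 2 * ⁅x⁻¹, y⁻¹⁆ = y * (x * x) * y := by rw [commutatorElement_def, sq]; group
    _ = y⁻¹ := by rw [h.mul_self_eq_one, mul_one, h.mul_self_eq_inv]

theorem commutator_mul_self (h : IsHexagonalPair x y) :
    ⁅x⁻¹, y⁻¹⁆ * ⁅x⁻¹, y⁻¹⁆ = ⁅x⁻¹, y⁻¹⁆⁻¹ :=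
  eq_inv_of_mul_eq_one_left (by rw [← pow_three', h.commutator_cube_eq_one])

theorem conj_commutator (h : IsHexagonalPair x y) : x * ⁅x⁻¹, y⁻¹⁆ * x⁻¹ = ⁅x⁻¹, y⁻¹⁆⁻¹ := by
  rw [commutatorElement_inv, commutatorElement_def, commutatorElement_def, h.inv_eq_self]
  simp only [mul_assoc, inv_inv, h.inv_eq_self, ← mul_assoc x x, h.mul_self_eq_one, one_mul]

theorem conj_xy_sq (h : IsHexagonalPair x y) : x * (x * y) ^ 2 * x⁻¹ = (y * x) ^ 2 := by
  rw [← conj_pow, ← mul_assoc, h.mul_self_eq_one, one_mul, h.inv_eq_self]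

theorem commutator_conj_yx_sq (h : IsHexagonalPair x y) :
    ⁅x⁻¹, y⁻¹⁆ * (y * x) ^ 2 * ⁅x⁻¹, y⁻¹⁆⁻¹ = (x * y) ^ 2 := by
  calc ⁅x⁻¹, y⁻¹⁆ * (y * x) ^ 2 * ⁅x⁻¹, y⁻¹⁆⁻¹
      = ⁅x⁻¹, y⁻¹⁆ * ((y * x) ^ 2 * ⁅x⁻¹, y⁻¹⁆) * (⁅x⁻¹, y⁻¹⁆ * ⁅x⁻¹, y⁻¹⁆)⁻¹ := by group
    _ = ⁅x⁻¹, y⁻¹⁆ * y⁻¹ * ⁅x⁻¹, y⁻¹⁆ := by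
      rw [h.yx_sq_mul_commutator, h.commutator_mul_self, inv_inv]
    _ = x⁻¹ * (y⁻¹ * (x * x⁻¹) * y⁻¹) * x * y := by simp only [commutatorElement_def]; group
    _ = (x * y) ^ 2 := by
      rw [mul_inv_cancel, mul_one, h.inv_mul_self_inv, h.inv_eq_self, sq, ← mul_assoc]

theorem yx_sq_mul_xy_sq (h : IsHexagonalPair x y) :
    (y * x) ^ 2 * (x * y) ^ 2 = y * ⁅x⁻¹, y⁻¹⁆ := by
  calc (y * x) ^ 2 * (x * y) ^ 2
      = (y * x) ^ 2 * ⁅x⁻¹, y⁻¹⁆ * ((y * x) ^ 2 * ⁅x⁻¹, y⁻¹⁆) * (⁅x⁻¹, y⁻¹⁆ * ⁅x⁻¹, y⁻¹⁆)⁻¹ := by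
        rw [← h.commutator_conj_yx_sq]; group
    _ = y * ⁅x⁻¹, y⁻¹⁆ := by
      rw [h.yx_sq_mul_commutator, h.inv_mul_self_inv, h.commutator_mul_self, inv_inv]

theorem commute_yx_sq_xy_sq (h : IsHexagonalPair x y) : Commute ((y * x) ^ 2) ((x * y) ^ 2) := by
  have hconj : x * (y * ⁅x⁻¹, y⁻¹⁆) * x⁻¹ = y * ⁅x⁻¹, y⁻¹⁆ := by
    have hconj_y : x * y * x⁻¹ = y * ⁅x⁻¹, y⁻¹⁆⁻¹ := by
      rw [commutatorElement_def, h.inv_eq_self]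
      simp [mul_assoc, h.inv_eq_self]
    rw [← conj_mul, hconj_y, h.conj_commutator, mul_assoc, ← mul_inv_rev,
      h.commutator_mul_self, inv_inv]
  calc (y * x) ^ 2 * (x * y) ^ 2 = x * ((y * x) ^ 2 * (x * y) ^ 2) * x⁻¹ := by
        rw [h.yx_sq_mul_xy_sq, hconj]
    _ = (x * y) ^ 2 * (y * x) ^ 2 := by
        rw [← conj_mul, h.conj_xy_sq, conj_mul_swap_pow]

theorem commutator_conj_xy_sq (h : IsHexagonalPair x y) :
    ⁅x⁻¹, y⁻¹⁆ * (x * y) ^ 2 * ⁅x⁻¹, y⁻¹⁆⁻¹ = ((y * x) ^ 2 * (x * y) ^ 2)⁻¹ := by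
  calc ⁅x⁻¹, y⁻¹⁆ * (x * y) ^ 2 * ⁅x⁻¹, y⁻¹⁆⁻¹
      = ⁅x⁻¹, y⁻¹⁆ * ⁅x⁻¹, y⁻¹⁆ * ((y * x) ^ 2 * ⁅x⁻¹, y⁻¹⁆)⁻¹ *
          ((y * x) ^ 2 * (x * y) ^ 2) * ⁅x⁻¹, y⁻¹⁆⁻¹ := by group
    _ = ⁅x⁻¹, y⁻¹⁆⁻¹ * (y * y) := by
      rw [h.yx_sq_mul_commutator, h.yx_sq_mul_xy_sq, h.commutator_mul_self]; group
    _ = ((y * x) ^ 2 * (x * y) ^ 2)⁻¹ := by rw [h.mul_self_eq_inv, h.yx_sq_mul_xy_sq, mul_inv_rev]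

/-- The homomorphism from `ℤ[ω]` sending `1` and `ω` to `(y * x) ^ 2` and `(x * y) ^ 2`. -/
def translationHom (h : IsHexagonalPair x y) : Multiplicative ℤ × Multiplicative ℤ →* G :=
  (zpowersHom G ((y * x) ^ 2)).noncommCoprod (zpowersHom G ((x * y) ^ 2)) fun a b ↦ by
    simpa only [zpowersHom_apply] using h.commute_yx_sq_xy_sq.zpow_zpow a.toAdd b.toAdd

theorem translationHom_apply (h : IsHexagonalPair x y) (v : Multiplicative ℤ × Multiplicative ℤ) :
    h.translationHom v = ((y * x) ^ 2) ^ v.1.toAdd * ((x * y) ^ 2) ^ v.2.toAdd :=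
  rfl

theorem commutator_conj_translationHom (h : IsHexagonalPair x y)
    (v : Multiplicative ℤ × Multiplicative ℤ) :
    ⁅x⁻¹, y⁻¹⁆ * h.translationHom v * ⁅x⁻¹, y⁻¹⁆⁻¹ = h.translationHom (v.2⁻¹, v.1 / v.2) := by
  have hcomm := h.commute_yx_sq_xy_sq
  simp only [translationHom_apply, ← conj_mul, ← conj_zpow, h.commutator_conj_yx_sq,
    h.commutator_conj_xy_sq, inv_zpow', hcomm.mul_zpow, toAdd_inv, toAdd_div]
  rw [← mul_assoc, ← (hcomm.zpow_zpow _ _).eq, mul_assoc, ← zpow_add, sub_eq_add_neg]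

theorem conj_translationHom (h : IsHexagonalPair x y) (v : Multiplicative ℤ × Multiplicative ℤ) :
    x * h.translationHom v * x⁻¹ = h.translationHom v.swap := by
  simp only [translationHom_apply, ← conj_mul, ← conj_zpow, conj_mul_swap_pow, h.conj_xy_sq,
    Prod.fst_swap, Prod.snd_swap]
  exact (h.commute_yx_sq_xy_sq.zpow_zpow _ _).symm.eq

/-- The extension of `translationHom` that sends multiplication by `ω` to `⁅x⁻¹, y⁻¹⁆` and the
reflection to `x`. -/
def ofHexagonalGroup (h : IsHexagonalPair x y) : HexagonalGroup (Multiplicative ℤ) →* G :=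
  HexagonalGroup.lift h.translationHom
    (dihedralLift ⁅x⁻¹, y⁻¹⁆ x h.commutator_cube_eq_one h.mul_self_eq_one h.conj_commutator)
    (fun v ↦ by rw [dihedralLift_r_one, h.commutator_conj_translationHom])
    (fun v ↦ by rw [dihedralLift_sr_zero, h.conj_translationHom])

@[simp]
theorem ofHexagonalGroup_reflection (h : IsHexagonalPair x y) :
    h.ofHexagonalGroup HexagonalGroup.reflection = x := by
  simp [ofHexagonalGroup, HexagonalGroup.reflection]

@[simp]
theorem ofHexagonalGroup_affineRotation (h : IsHexagonalPair x y) :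
    h.ofHexagonalGroup (HexagonalGroup.affineRotation (.ofAdd 1)) = y := by
  rw [ofHexagonalGroup, HexagonalGroup.affineRotation, map_inv, map_mul, HexagonalGroup.lift_inl,
    HexagonalGroup.lift_inr, dihedralLift_r_one, translationHom_apply, inv_eq_iff_eq_inv]
  simpa using h.yx_sq_mul_commutator

/-- The homomorphism out of `K18` sending the two generators to `x` and `y`. -/
def ofK18 (h : IsHexagonalPair x y) : K18 →* G :=
  PresentedGroup.toGroup (f := ![x, y]) <| by
    rintro _ (rfl | rfl | rfl)
    · simpa using h.sq_eq_one
    · simpa using h.cube_eq_one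
    · simpa [commutatorElement_def] using h.commutator_cube_eq_one

@[simp]
theorem ofK18_of_zero (h : IsHexagonalPair x y) : h.ofK18 (.of 0) = x :=
  PresentedGroup.toGroup.of _

@[simp]
theorem ofK18_of_one (h : IsHexagonalPair x y) : h.ofK18 (.of 1) = y :=
  PresentedGroup.toGroup.of _

end IsHexagonalPair

theorem isHexagonalPair_of_K18 : IsHexagonalPair (.of 0 : K18) (.of 1) where
  sq_eq_one := PresentedGroup.one_of_mem (by simp [rels18])
  cube_eq_one := PresentedGroup.one_of_mem (by simp [rels18])
  commutator_cube_eq_one := by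
    rw [commutatorElement_def, inv_inv, inv_inv]
    exact PresentedGroup.one_of_mem (by simp [rels18])

namespace HexagonalGroup

variable {M : Type*} [CommGroup M]

theorem commutator_reflection_affineRotation (m : M) :
    ⁅(reflection : HexagonalGroup M)⁻¹, (affineRotation m)⁻¹⁆ = inr (r 1) := by
  rw [commutatorElement_def, mul_inv_eq_iff_eq_mul]
  ext
  · simp [reflection, affineRotation]
  · simp [reflection, affineRotation]
  · exact (by decide : (sr 0 * (1 * r 1)⁻¹⁻¹ * sr 0 : DihedralGroup 3) = r 1 * (1 * r 1)⁻¹⁻¹)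

theorem isHexagonalPair (m : M) : IsHexagonalPair reflection (affineRotation m) where
  sq_eq_one := by rw [reflection, ← map_pow, sq, sr_mul_self, map_one]
  cube_eq_one := by
    rw [affineRotation, inv_pow, inv_eq_one]
    ext
    · simp [pow_three]
    · simp [pow_three]
    · exact (by decide : ((1 * r 1) ^ 3 : DihedralGroup 3) = 1)
  commutator_cube_eq_one := by
    rw [commutator_reflection_affineRotation, ← map_pow]
    exact congrArg inr (by decide)

theorem hom_ext {G : Type*} [Group G] {f g : HexagonalGroup (Multiplicative ℤ) →* G}
    (hx : f reflection = g reflection)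
    (hy : f (affineRotation (.ofAdd 1)) = g (affineRotation (.ofAdd 1))) : f = g := by
  have hr : f (inr (r 1)) = g (inr (r 1)) := by
    simp only [← commutator_reflection_affineRotation (.ofAdd 1 : Multiplicative ℤ),
      map_commutatorElement, map_inv, hx, hy]
  have hfst : f (inl (.ofAdd 1, 1)) = g (inl (.ofAdd 1, 1)) := by
    simpa [affineRotation, hr] using hy
  have hsnd : f (inl (1, .ofAdd 1)) = g (inl (1, .ofAdd 1)) := by
    have hswap : (inl (1, .ofAdd 1) : HexagonalGroup (Multiplicative ℤ)) =
        reflection * inl (.ofAdd 1, 1) * reflection⁻¹ := by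
      rw [reflection, ← map_inv, ← inl_aut, hexAction_sr_zero, Prod.swap_prod_mk]
    rw [hswap]
    simp only [map_mul, map_inv, hx, hfst]
  refine SemidirectProduct.hom_ext ?_ (MonoidHom.eq_of_eqOn_dense (closure_r_one_sr_zero 3) ?_)
  · exact hom_ext_prod_multiplicative_int hfst hsnd
  · rintro _ (rfl | rfl)
    exacts [hr, hx]

end HexagonalGroup

/-- The presentation of the wallpaper group `p31m`. -/
def K18EquivHexagonalGroup : K18 ≃* HexagonalGroup (Multiplicative ℤ) :=
  MonoidHom.toMulEquiv (HexagonalGroup.isHexagonalPair (.ofAdd 1)).ofK18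
    isHexagonalPair_of_K18.ofHexagonalGroup
    (PresentedGroup.ext fun i ↦ by fin_cases i <;> simp)
    (HexagonalGroup.hom_ext (by simp) (by simp))

end Presentation

/-- the second derived subgroup `K''` of
`K = ⟨x, y ∣ x² = y³ = [x,y]³ = 1⟩` has index `54` in `K` and `K'' ≅ ℤ × ℤ`. -/
theorem stmt18 :
    (derivedSeries K18 2).index = 54 ∧
    Nonempty ((derivedSeries K18 2) ≃* Multiplicative ℤ × Multiplicative ℤ) := by
  let e := K18EquivHexagonalGroup
  have he : (derivedSeries K18 2).map e = derivedSeries (HexagonalGroup (Multiplicative ℤ)) 2 :=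
    map_derivedSeries_eq e.surjective 2
  constructor
  · rw [← Subgroup.index_map_equiv _ e, he, HexagonalGroup.index_derivedSeries_two,
      index_range_powMonoidHom_multiplicative_int]
    norm_num
  · exact ⟨(e.subgroupMap _).trans <| (MulEquiv.subgroupCongr he).trans <|
      HexagonalGroup.derivedSeriesTwoEquiv _⟩
end

section
/- Let K be the group with presentation ⟨x, y | x³ = y³ = [x,y]² = 1⟩. Then K has order 288, the abelianization K/K' is isomorphic to C_3 × C_3, and the second derived subgroup K'' is isomorphic to C_2. -/
/-- The relators `x³`, `y³`, `[x,y]²` in the free group on two generators. -/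
def rels19 : Set (FreeGroup (Fin 2)) :=
  { (FreeGroup.of 0) ^ 3, (FreeGroup.of 1) ^ 3,
    ((FreeGroup.of 0)⁻¹ * (FreeGroup.of 1)⁻¹ * FreeGroup.of 0 * FreeGroup.of 1) ^ 2 }

/-- `K = ⟨x, y ∣ x³ = y³ = [x,y]² = 1⟩`. -/
abbrev K19 : Type := PresentedGroup rels19

/-!
Write `⁅g, h⁆ = g * h * g⁻¹ * h⁻¹`. Since `x³ = y³ = 1`, the derived subgroup of `K = ⟨x, y⟩` is
generated by the four commutators `a₁ = ⁅x⁻¹, y⁻¹⁆`, `a₂ = ⁅x, y⁆`, `b₁ = ⁅x, y⁻¹⁆`,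
`b₂ = ⁅x⁻¹, y⁆`. They are involutions, each `aᵢ` commutes with each `bⱼ`, and `⁅a₁, a₂⁆ = ⁅b₁, b₂⁆`.
Hence `z = ⁅a₁, a₂⁆` is central in `K'`, satisfies `z² = 1` and generates `K''`, and if `z ≠ 1` then
`K'` is the central product of two dihedral groups of order `8`, of order `32`. That `z ≠ 1` is seen
by mapping `K` to the central product of two copies of `SL₂(𝔽₃)`. With `K / K' ≅ C₃ × C₃` the order
of `K` is `9 * 32 = 288`.
-/

open Subgroup
open scoped commutatorElement MatrixGroups

section Commutators

variable {G : Type*} [Group G]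

theorem commutator_closure_le {S T : Set G} {Z : Subgroup G}
    (hS : closure S ≤ normalizer (Z : Set G)) (hT : closure T ≤ normalizer (Z : Set G))
    (hST : ∀ s ∈ S, ∀ t ∈ T, ⁅s, t⁆ ∈ Z) : ⁅closure S, closure T⁆ ≤ Z := by
  rw [le_normalizer_iff] at hS hT
  have mem_of_mem_left : ∀ s ∈ S, ∀ t ∈ closure T, ⁅s, t⁆ ∈ Z := by
    intro s hs t ht
    induction ht using closure_induction with
    | mem t ht => exact hST s hs t ht
    | one => simp
    | mul t u ht _ iht ihu =>
      rw [show ⁅s, t * u⁆ = ⁅s, t⁆ * (t * ⁅s, u⁆ * t⁻¹) by group]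
      exact mul_mem iht (hT t ht _ ihu)
    | inv t ht ih =>
      rw [show ⁅s, t⁻¹⁆ = t⁻¹ * ⁅s, t⁆⁻¹ * t⁻¹⁻¹ by group]
      exact hT _ (inv_mem ht) _ (inv_mem ih)
  refine commutator_le.mpr fun s hs t ht ↦ ?_
  induction hs using closure_induction with
  | mem s hs => exact mem_of_mem_left s hs t ht
  | one => simp
  | mul s u hs _ ihs ihu =>
    rw [commutatorElement_mul_left_eq_conj_mul]
    exact mul_mem (hS s hs _ ihu) ihs
  | inv s hs ih =>
    rw [show ⁅s⁻¹, t⁆ = s⁻¹ * ⁅s, t⁆⁻¹ * s⁻¹⁻¹ by group]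
    exact hS _ (inv_mem hs) _ (inv_mem ih)

theorem commutator_eq_commutator_zpowers {x y : G} (hxy : closure {x, y} = ⊤) :
    commutator G = ⁅zpowers x, zpowers y⁆ := by
  refine le_antisymm ?_ (commutator_mono le_top le_top)
  have hN : closure {x, y} ≤ normalizer (⁅zpowers x, zpowers y⁆ : Subgroup G) := by
    rw [closure_le]
    rintro g (rfl | rfl)
    · exact normalizer_commutator_ge_left _ _ (mem_zpowers _)
    · exact normalizer_commutator_ge_right _ _ (mem_zpowers _)
  have hc : ⁅x, y⁆ ∈ ⁅zpowers x, zpowers y⁆ :=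
    commutator_mem_commutator (mem_zpowers x) (mem_zpowers y)
  rw [_root_.commutator_def, ← hxy]
  refine commutator_closure_le hN hN ?_
  rintro s (rfl | rfl) t (rfl | rfl)
  · simp
  · exact hc
  · rw [← commutatorElement_inv]
    exact inv_mem hc
  · simp

theorem mem_zpowers_iff_of_pow_three_eq_one {x g : G} (hx : x ^ 3 = 1) :
    g ∈ zpowers x ↔ g = 1 ∨ g = x ∨ g = x⁻¹ := by
  constructor
  · rintro ⟨k, rfl⟩
    obtain ⟨m, r, rfl, hr⟩ : ∃ m r : ℤ, k = 3 * m + r ∧ (r = 0 ∨ r = 1 ∨ r = -1) :=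
      ⟨(k + 1) / 3, k - 3 * ((k + 1) / 3), by ring, by lia⟩
    have h3 : x ^ (3 : ℤ) = 1 := mod_cast hx
    rcases hr with rfl | rfl | rfl <;> simp [zpow_add, zpow_mul, h3]
  · rintro (rfl | rfl | rfl)
    exacts [one_mem _, mem_zpowers _, inv_mem (mem_zpowers _)]

theorem commutator_zpowers_eq_closure {x y : G} (hx : x ^ 3 = 1) (hy : y ^ 3 = 1) :
    ⁅zpowers x, zpowers y⁆ = closure {⁅x⁻¹, y⁻¹⁆, ⁅x, y⁆, ⁅x, y⁻¹⁆, ⁅x⁻¹, y⁆} := by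
  have hxi : x⁻¹ ∈ zpowers x := inv_mem (mem_zpowers x)
  have hyi : y⁻¹ ∈ zpowers y := inv_mem (mem_zpowers y)
  apply le_antisymm
  · rw [commutator_le]
    intro g hg h hh
    rw [mem_zpowers_iff_of_pow_three_eq_one hx] at hg
    rw [mem_zpowers_iff_of_pow_three_eq_one hy] at hh
    rcases hg with rfl | rfl | rfl <;> rcases hh with rfl | rfl | rfl <;>
      first
      | simp only [commutatorElement_one_left, commutatorElement_one_right, one_mem]
      | exact subset_closure (by simp)
  · rw [closure_le]
    rintro _ (rfl | rfl | rfl | rfl)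
    exacts [commutator_mem_commutator hxi hyi,
      commutator_mem_commutator (mem_zpowers x) (mem_zpowers y),
      commutator_mem_commutator (mem_zpowers x) hyi,
      commutator_mem_commutator hxi (mem_zpowers y)]

theorem commute_commutatorElement_right {g a b : G} (ha : Commute g a) (hb : Commute g b) :
    Commute g ⁅a, b⁆ :=
  ((ha.mul_right hb).mul_right ha.inv_right).mul_right hb.inv_right

end Commutators

section Involutions

variable {G : Type*} [Group G]

theorem commute_of_sq_eq_one {a b : G} (ha : a ^ 2 = 1) (hb : b ^ 2 = 1)
    (hab : (a * b) ^ 2 = 1) : Commute a b := by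
  have inv_eq {g : G} (hg : g ^ 2 = 1) : g⁻¹ = g := inv_eq_of_mul_eq_one_right (sq g ▸ hg)
  calc a * b = (a * b)⁻¹ := (inv_eq hab).symm
    _ = b * a := by rw [mul_inv_rev, inv_eq ha, inv_eq hb]

theorem commutatorElement_eq_mul_sq {a b : G} (ha : a ^ 2 = 1) (hb : b ^ 2 = 1) :
    ⁅a, b⁆ = (a * b) ^ 2 := by
  rw [commutatorElement_def, inv_eq_of_mul_eq_one_right (sq a ▸ ha),
    inv_eq_of_mul_eq_one_right (sq b ▸ hb), sq, mul_assoc (a * b)]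

theorem commutatorElement_sq_eq_one {a b : G} (ha : a ^ 2 = 1) (hab : Commute a ⁅a, b⁆) :
    ⁅a, b⁆ ^ 2 = 1 := by
  calc ⁅a, b⁆ ^ 2 = a * ⁅a, b⁆ * a⁻¹ * ⁅a, b⁆ := by rw [hab.eq, mul_inv_cancel_right, sq]
    _ = ⁅a ^ 2, b⁆ := by rw [sq, commutatorElement_mul_left_eq_conj_mul]
    _ = 1 := by rw [ha, commutatorElement_one_left]

end Involutions

section ClosureInsert

variable {G : Type*} [Group G] {S : Set G} {g : G}

theorem mem_normalizer_closure_of_commutator_mem (hg : g ^ 2 ∈ closure S)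
    (hS : ∀ s ∈ S, ⁅g, s⁆ ∈ closure S) :
    g ∈ normalizer (closure S : Set G) := by
  have conj_mem : closure S ≤ (closure S).comap (MulAut.conj g).toMonoidHom := by
    refine (closure_le _).mpr fun s hs ↦ ?_
    change MulAut.conj g s ∈ closure S
    rw [conj_eq_commutatorElement_mul]
    exact mul_mem (hS s hs) (subset_closure hs)
  refine mem_normalizer_iff.mpr fun h ↦ ⟨fun hh ↦ conj_mem hh, fun hh ↦ ?_⟩
  have conj_sq_mem : g * (g * h * g⁻¹) * g⁻¹ ∈ closure S := conj_mem hh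
  rwa [show g * (g * h * g⁻¹) * g⁻¹ = g ^ 2 * h * (g ^ 2)⁻¹ by rw [sq]; group,
    mul_mem_cancel_right (inv_mem hg), mul_mem_cancel_left hg] at conj_sq_mem

theorem card_closure_insert_of_sq_mem (hgS : g ∉ closure S)
    (hn : g ∈ normalizer (closure S : Set G)) (h2 : g ^ 2 ∈ closure S) :
    Nat.card (closure (insert g S)) = 2 * Nat.card (closure S) := by
  have mem_or_mem : ∀ b ∈ closure (insert g S), b * g ∈ closure S ∨ b ∈ closure S := by
    intro b hb
    rw [Set.insert_eq, Subgroup.closure_union, ← zpowers_eq_closure, ← SetLike.mem_coe,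
      coe_mul_of_left_le_normalizer_right _ _ (zpowers_le.mpr hn)] at hb
    obtain ⟨_, ⟨k, rfl⟩, h, hh, rfl⟩ := hb
    have even_mem (m : ℤ) : g ^ (2 * m) ∈ closure S := by
      rw [zpow_mul]
      exact zpow_mem (mod_cast h2) m
    obtain ⟨m, rfl | rfl⟩ := Int.even_or_odd' k
    · exact Or.inr (mul_mem (even_mem m) hh)
    · have hconj : g⁻¹ * h * g ∈ closure S := (mem_normalizer_iff''.mp hn h).mp hh
      left
      convert mul_mem (even_mem (m + 1)) hconj using 1
      group
  have hrel : (closure S).relIndex (closure (insert g S)) = 2 :=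
    relIndex_eq_two_iff_exists_notMem_and.mpr
      ⟨g, subset_closure (Set.mem_insert g S), hgS, mem_or_mem⟩
  have hcard := relIndex_mul_relIndex ⊥ (closure S) (closure (insert g S)) bot_le
    (closure_mono (Set.subset_insert g S))
  rwa [hrel, relIndex_bot_left, relIndex_bot_left, mul_comm, eq_comm] at hcard

theorem notMem_closure_of_not_commute {t : G} (hS : ∀ s ∈ S, Commute s t)
    (hg : ¬ Commute g t) : g ∉ closure S := fun h ↦
  hg (mem_centralizer_singleton_iff.mp ((closure_le (centralizer {t})).mpr
    (fun s hs ↦ mem_centralizer_singleton_iff.mpr (hS s hs).eq) h))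

end ClosureInsert

/-- Two mutually centralising pairs of involutions with the same commutator; they generate a
quotient of the central product of two dihedral groups of order `8`. -/
structure CommutingDihedralPairs {G : Type*} [Group G] (a₁ a₂ b₁ b₂ : G) : Prop where
  sq_a₁ : a₁ ^ 2 = 1
  sq_a₂ : a₂ ^ 2 = 1
  sq_b₁ : b₁ ^ 2 = 1
  sq_b₂ : b₂ ^ 2 = 1
  commute_a₁_b₁ : Commute a₁ b₁
  commute_a₁_b₂ : Commute a₁ b₂
  commute_a₂_b₁ : Commute a₂ b₁
  commute_a₂_b₂ : Commute a₂ b₂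
  commutator_eq : ⁅a₁, a₂⁆ = ⁅b₁, b₂⁆

namespace CommutingDihedralPairs

variable {G : Type*} [Group G] {a₁ a₂ b₁ b₂ : G}

theorem commute_commutator (h : CommutingDihedralPairs a₁ a₂ b₁ b₂) :
    ∀ s ∈ ({a₁, a₂, b₁, b₂} : Set G), Commute s ⁅a₁, a₂⁆ := by
  rintro s (rfl | rfl | rfl | rfl)
  · exact h.commutator_eq ▸ commute_commutatorElement_right h.commute_a₁_b₁ h.commute_a₁_b₂
  · exact h.commutator_eq ▸ commute_commutatorElement_right h.commute_a₂_b₁ h.commute_a₂_b₂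
  · exact commute_commutatorElement_right h.commute_a₁_b₁.symm h.commute_a₂_b₁.symm
  · exact commute_commutatorElement_right h.commute_a₁_b₂.symm h.commute_a₂_b₂.symm

theorem commutator_sq (h : CommutingDihedralPairs a₁ a₂ b₁ b₂) : ⁅a₁, a₂⁆ ^ 2 = 1 :=
  commutatorElement_sq_eq_one h.sq_a₁ (h.commute_commutator a₁ (by simp))

theorem commutator_mem_zpowers (h : CommutingDihedralPairs a₁ a₂ b₁ b₂) :
    ∀ s ∈ ({a₁, a₂, b₁, b₂} : Set G), ∀ t ∈ ({a₁, a₂, b₁, b₂} : Set G),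
      ⁅s, t⁆ ∈ zpowers ⁅a₁, a₂⁆ := by
  have ha : ⁅a₂, a₁⁆ ∈ zpowers ⁅a₁, a₂⁆ := by
    rw [← commutatorElement_inv a₁]
    exact inv_mem (mem_zpowers _)
  have hb : ⁅b₁, b₂⁆ ∈ zpowers ⁅a₁, a₂⁆ := h.commutator_eq ▸ mem_zpowers _
  have hb' : ⁅b₂, b₁⁆ ∈ zpowers ⁅a₁, a₂⁆ := by
    rw [← commutatorElement_inv b₁]
    exact inv_mem hb
  simp [ha, hb, hb', h.commute_a₁_b₁.commutator_eq, h.commute_a₁_b₂.commutator_eq,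
    h.commute_a₂_b₁.commutator_eq, h.commute_a₂_b₂.commutator_eq,
    h.commute_a₁_b₁.symm.commutator_eq, h.commute_a₁_b₂.symm.commutator_eq,
    h.commute_a₂_b₁.symm.commutator_eq, h.commute_a₂_b₂.symm.commutator_eq]

theorem commutator_closure_eq_zpowers (h : CommutingDihedralPairs a₁ a₂ b₁ b₂) :
    ⁅closure {a₁, a₂, b₁, b₂}, closure {a₁, a₂, b₁, b₂}⁆ = zpowers ⁅a₁, a₂⁆ := by
  have hN : closure {a₁, a₂, b₁, b₂} ≤ normalizer (zpowers ⁅a₁, a₂⁆ : Set G) := by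
    refine le_trans ((closure_le _).mpr fun s hs ↦ ?_)
      (centralizer_le_normalizer (zpowers ⁅a₁, a₂⁆ : Set G))
    rintro _ ⟨k, rfl⟩
    exact ((h.commute_commutator s hs).zpow_right k).symm.eq
  apply le_antisymm
  · exact commutator_closure_le hN hN h.commutator_mem_zpowers
  · rw [zpowers_le]
    exact commutator_mem_commutator (subset_closure (by simp)) (subset_closure (by simp))

theorem card_closure_insert (h : CommutingDihedralPairs a₁ a₂ b₁ b₂) {S : Set G} {g t : G}
    (hg : g ∈ ({a₁, a₂, b₁, b₂} : Set G)) (hg2 : g ^ 2 = 1) (hzS : ⁅a₁, a₂⁆ ∈ S)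
    (hS : S ⊆ insert ⁅a₁, a₂⁆ {a₁, a₂, b₁, b₂}) (hSt : ∀ s ∈ S, Commute s t)
    (hgt : ⁅g, t⁆ ≠ 1) : Nat.card (closure (insert g S)) = 2 * Nat.card (closure S) := by
  rw [Ne, commutatorElement_eq_one_iff_commute] at hgt
  have sq_mem : g ^ 2 ∈ closure S := hg2 ▸ one_mem _
  refine card_closure_insert_of_sq_mem (notMem_closure_of_not_commute hSt hgt)
    (mem_normalizer_closure_of_commutator_mem sq_mem fun s hs ↦ ?_) sq_mem
  rcases hS hs with rfl | hs
  · rw [(h.commute_commutator g hg).commutator_eq]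
    exact one_mem _
  · exact zpowers_le.mpr (subset_closure hzS) (h.commutator_mem_zpowers g hg s hs)

theorem closure_eq_closure_insert_commutator (h : CommutingDihedralPairs a₁ a₂ b₁ b₂) :
    closure {a₁, a₂, b₁, b₂} = closure {b₂, b₁, a₂, a₁, ⁅a₁, a₂⁆} := by
  have z_mem : ⁅a₁, a₂⁆ ∈ closure {a₁, a₂, b₁, b₂} :=
    commutator_le_self _ (h.commutator_closure_eq_zpowers ▸ mem_zpowers _)
  apply le_antisymm
  · exact closure_mono (by simp [Set.insert_subset_iff])
  · rw [closure_le]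
    rintro _ (rfl | rfl | rfl | rfl | rfl)
    exacts [subset_closure (by simp), subset_closure (by simp), subset_closure (by simp),
      subset_closure (by simp), z_mem]

theorem card_closure (h : CommutingDihedralPairs a₁ a₂ b₁ b₂) (hz : ⁅a₁, a₂⁆ ≠ 1) :
    Nat.card (closure {a₁, a₂, b₁, b₂}) = 32 := by
  have ha' : ⁅a₂, a₁⁆ ≠ 1 := by rwa [← commutatorElement_inv, inv_ne_one]
  have hb : ⁅b₁, b₂⁆ ≠ 1 := by rwa [← h.commutator_eq]
  have hb' : ⁅b₂, b₁⁆ ≠ 1 := by rwa [← commutatorElement_inv, inv_ne_one]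
  have za₁ : Commute ⁅a₁, a₂⁆ a₁ := (h.commute_commutator a₁ (by simp)).symm
  have za₂ : Commute ⁅a₁, a₂⁆ a₂ := (h.commute_commutator a₂ (by simp)).symm
  have zb₁ : Commute ⁅a₁, a₂⁆ b₁ := (h.commute_commutator b₁ (by simp)).symm
  have zb₂ : Commute ⁅a₁, a₂⁆ b₂ := (h.commute_commutator b₂ (by simp)).symm
  rw [h.closure_eq_closure_insert_commutator,
    h.card_closure_insert (t := b₁) (by simp) h.sq_b₂ (by simp) (by simp [Set.insert_subset_iff])
      (by simp [zb₁, h.commute_a₁_b₁, h.commute_a₂_b₁]) hb',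
    h.card_closure_insert (t := b₂) (by simp) h.sq_b₁ (by simp) (by simp [Set.insert_subset_iff])
      (by simp [zb₂, h.commute_a₁_b₂, h.commute_a₂_b₂]) hb,
    h.card_closure_insert (t := a₁) (by simp) h.sq_a₂ (by simp) (by simp [Set.insert_subset_iff])
      (by simp [za₁]) ha',
    h.card_closure_insert (t := a₂) (by simp) h.sq_a₁ (by simp) (by simp) (by simpa using za₂) hz,
    ← zpowers_eq_closure, Nat.card_zpowers, orderOf_eq_prime h.commutator_sq hz]

end CommutingDihedralPairs

section Relations

variable {G : Type*} [Group G] {x y : G}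

theorem commutatorElement_inv_left_pow_eq_one {n : ℕ} (h : ⁅x, y⁆ ^ n = 1) :
    ⁅x⁻¹, y⁆ ^ n = 1 := by
  have hconj : ⁅x⁻¹, y⁆ = x⁻¹ * ⁅x, y⁆⁻¹ * x⁻¹⁻¹ := by group
  rw [hconj, conj_pow, inv_pow, h, inv_one, mul_one, mul_inv_cancel]

theorem commutatorElement_pow_eq_one_comm {n : ℕ} : ⁅x, y⁆ ^ n = 1 ↔ ⁅y, x⁆ ^ n = 1 := by
  rw [← commutatorElement_inv y x, inv_pow, inv_eq_one]

theorem conj_commutatorElement_inv_right (hy : y ^ 3 = 1) (g : G) :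
    y⁻¹ * ⁅g, y⁻¹⁆ * y⁻¹⁻¹ = ⁅g, y⁻¹⁆⁻¹ * ⁅g, y⁆ := by
  have hy' : y * y = y⁻¹ := eq_inv_of_mul_eq_one_left (by rw [← sq, ← pow_succ, hy])
  calc y⁻¹ * ⁅g, y⁻¹⁆ * y⁻¹⁻¹ = y⁻¹ * g * y⁻¹ * g⁻¹ * (y * y) := by group
    _ = y⁻¹ * g * (y * y) * g⁻¹ * y⁻¹ := by rw [hy']
    _ = ⁅g, y⁻¹⁆⁻¹ * ⁅g, y⁆ := by group

theorem commute_commutatorElement_inv_right (hy : y ^ 3 = 1) {g : G} (h : ⁅g, y⁆ ^ 2 = 1)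
    (h' : ⁅g, y⁻¹⁆ ^ 2 = 1) : Commute ⁅g, y⁻¹⁆ ⁅g, y⁆ := by
  rw [← Commute.inv_left_iff]
  refine commute_of_sq_eq_one (by rw [inv_pow, h', inv_one]) h ?_
  rw [← conj_commutatorElement_inv_right hy, conj_pow, h', mul_one, mul_inv_cancel]

theorem commute_commutatorElement_inv_left (hx : x ^ 3 = 1) {g : G} (h : ⁅x, g⁆ ^ 2 = 1)
    (h' : ⁅x⁻¹, g⁆ ^ 2 = 1) : Commute ⁅x⁻¹, g⁆ ⁅x, g⁆ := by
  rw [commutatorElement_pow_eq_one_comm] at h h'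
  simpa only [commutatorElement_inv] using (commute_commutatorElement_inv_right hx h h').inv_inv

theorem commutingDihedralPairs_commutatorElement (hx : x ^ 3 = 1) (hy : y ^ 3 = 1)
    (hxy : ⁅x⁻¹, y⁻¹⁆ ^ 2 = 1) :
    CommutingDihedralPairs ⁅x⁻¹, y⁻¹⁆ ⁅x, y⁆ ⁅x, y⁻¹⁆ ⁅x⁻¹, y⁆ := by
  have sq_b₁ : ⁅x, y⁻¹⁆ ^ 2 = 1 := inv_inv x ▸ commutatorElement_inv_left_pow_eq_one hxy
  have sq_b₂ : ⁅x⁻¹, y⁆ ^ 2 = 1 := by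
    rw [commutatorElement_pow_eq_one_comm] at hxy ⊢
    exact inv_inv y ▸ commutatorElement_inv_left_pow_eq_one hxy
  have sq_a₂ : ⁅x, y⁆ ^ 2 = 1 := inv_inv x ▸ commutatorElement_inv_left_pow_eq_one sq_b₂
  have a₁b₁ := commute_commutatorElement_inv_left hx sq_b₁ hxy
  have a₁b₂ := commute_commutatorElement_inv_right hy sq_b₂ hxy
  have a₂b₁ := (commute_commutatorElement_inv_right hy sq_a₂ sq_b₁).symm
  have a₂b₂ := (commute_commutatorElement_inv_left hx sq_a₂ sq_b₂).symm
  refine ⟨hxy, sq_a₂, sq_b₁, sq_b₂, a₁b₁, a₁b₂, a₂b₁, a₂b₂, ?_⟩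
  -- The product `b₁ * a₁` of commuting involutions is an involution, hence so is its conjugate
  -- `(a₂ * a₁) * (b₁ * b₂)`, whose square is `⁅a₂, a₁⁆ * ⁅b₁, b₂⁆`.
  have hconj : y⁻¹ * (⁅x, y⁻¹⁆ * ⁅x⁻¹, y⁻¹⁆) * y⁻¹⁻¹ =
      (⁅x, y⁆ * ⁅x⁻¹, y⁻¹⁆) * (⁅x, y⁻¹⁆ * ⁅x⁻¹, y⁆) := by
    have inv_b₁ := inv_eq_of_mul_eq_one_right (sq ⁅x, y⁻¹⁆ ▸ sq_b₁)
    have inv_a₁ := inv_eq_of_mul_eq_one_right (sq ⁅x⁻¹, y⁻¹⁆ ▸ hxy)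
    rw [← conj_mul, conj_commutatorElement_inv_right hy, conj_commutatorElement_inv_right hy,
      inv_b₁, inv_a₁, ← a₂b₁.eq]
    simp only [mul_assoc]
    rw [a₁b₁.left_comm]
  have hsq : (⁅x, y⁆ * ⁅x⁻¹, y⁻¹⁆) ^ 2 * (⁅x, y⁻¹⁆ * ⁅x⁻¹, y⁆) ^ 2 = 1 := by
    rw [← ((a₂b₁.mul_right a₂b₂).mul_left (a₁b₁.mul_right a₁b₂)).mul_pow, ← hconj, conj_pow,
      a₁b₁.symm.mul_pow, sq_b₁, hxy, mul_one, mul_one, mul_inv_cancel]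
  rw [← commutatorElement_eq_mul_sq sq_a₂ hxy, ← commutatorElement_eq_mul_sq sq_b₁ sq_b₂] at hsq
  rw [← commutatorElement_inv, inv_eq_of_mul_eq_one_right hsq]

end Relations

section Cyclic

variable {A : Type*} [Group A]

/-- The homomorphism from the cyclic group of order `n` sending the generator to an element `g`
with `g ^ n = 1`. -/
def zmodPowersHom (n : ℕ) (g : A) (hg : g ^ n = 1) : Multiplicative (ZMod n) →* A :=
  AddMonoidHom.toMultiplicativeLeft (ZMod.lift n
    ⟨zmultiplesHom (Additive A) (Additive.ofMul g), by simp [← ofMul_pow, hg]⟩)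

theorem zmodPowersHom_ofAdd_one (n : ℕ) (g : A) (hg : g ^ n = 1) :
    zmodPowersHom n g hg (Multiplicative.ofAdd 1) = g := by
  simpa [zmodPowersHom] using congrArg Additive.toMul (ZMod.lift_coe n
    ⟨zmultiplesHom (Additive A) (Additive.ofMul g), by simp [← ofMul_pow, hg]⟩ 1)

theorem multiplicativeZMod_hom_ext {n : ℕ} {f g : Multiplicative (ZMod n) →* A}
    (h : f (Multiplicative.ofAdd 1) = g (Multiplicative.ofAdd 1)) : f = g := by
  refine MonoidHom.ext fun k ↦ ?_
  obtain ⟨m, rfl⟩ : ∃ m : ℤ, Multiplicative.ofAdd (1 : ZMod n) ^ m = k := by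
    obtain ⟨m, hm⟩ := ZMod.intCast_surjective k.toAdd
    exact ⟨m, by rw [← ofAdd_zsmul, zsmul_one, hm, ofAdd_toAdd]⟩
  rw [map_zpow, map_zpow, h]

end Cyclic

section NegOne

variable {G : Type*} [Group G] [HasDistribNeg G]

instance normal_zpowers_neg_one : (zpowers (-1 : G × G)).Normal where
  conj_mem := by
    rintro _ ⟨k, rfl⟩ g
    have hcomm : Commute g (-1) :=
      Prod.ext (Commute.neg_one_right g.1).eq (Commute.neg_one_right g.2).eq
    rw [(hcomm.zpow_right k).eq, mul_inv_cancel_right]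
    exact zpow_mem_zpowers _ k

theorem neg_one_one_notMem_zpowers_neg_one (h : (-1 : G) ≠ 1) :
    (-1, 1) ∉ zpowers (-1 : G × G) := by
  have hle : zpowers (-1 : G × G) ≤ (MonoidHom.fst G G).eqLocus (MonoidHom.snd G G) :=
    zpowers_le.mpr rfl
  exact fun hmem ↦ h (hle hmem)

end NegOne

namespace K19

/-- The first generator of `K19`. -/
def x : K19 := PresentedGroup.of 0

/-- The second generator of `K19`. -/
def y : K19 := PresentedGroup.of 1

theorem closure_x_y : closure {x, y} = ⊤ := by
  have hrange : Set.range (PresentedGroup.of (rels := rels19)) = {x, y} := by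
    ext; simp [x, y, Fin.exists_fin_two, eq_comm]
  rw [← hrange, PresentedGroup.closure_range_of]

theorem x_pow_three : x ^ 3 = 1 :=
  PresentedGroup.one_of_mem (rels := rels19) (Or.inl rfl)

theorem y_pow_three : y ^ 3 = 1 :=
  PresentedGroup.one_of_mem (rels := rels19) (Or.inr (Or.inl rfl))

theorem commutator_inv_sq : ⁅x⁻¹, y⁻¹⁆ ^ 2 = 1 := by
  rw [commutatorElement_def, inv_inv, inv_inv]
  exact PresentedGroup.one_of_mem (rels := rels19) (Or.inr (Or.inr rfl))

section Lift

variable {G : Type*} [Group G] {u v : G}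

/-- The homomorphism from `K19` given by a pair of elements satisfying its relations. -/
def lift (hu : u ^ 3 = 1) (hv : v ^ 3 = 1) (huv : (u⁻¹ * v⁻¹ * u * v) ^ 2 = 1) : K19 →* G :=
  PresentedGroup.toGroup (f := ![u, v]) (by rintro _ (rfl | rfl | rfl) <;> simpa)

variable (hu : u ^ 3 = 1) (hv : v ^ 3 = 1) (huv : (u⁻¹ * v⁻¹ * u * v) ^ 2 = 1)

theorem lift_x : lift hu hv huv x = u := PresentedGroup.toGroup.of _

theorem lift_y : lift hu hv huv y = v := PresentedGroup.toGroup.of _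

theorem hom_ext {f g : K19 →* G} (hx : f x = g x) (hy : f y = g y) : f = g :=
  PresentedGroup.ext (Fin.forall_fin_two.mpr ⟨hx, hy⟩)

end Lift

theorem commutatorElement_ne_one : ⁅⁅x⁻¹, y⁻¹⁆, ⁅x, y⁆⁆ ≠ 1 := by
  let T : SL(2, ZMod 3) := Matrix.SpecialLinearGroup.transvection zero_ne_one 1
  let L : SL(2, ZMod 3) := Matrix.SpecialLinearGroup.transvection one_ne_zero 1
  let u : SL(2, ZMod 3) × SL(2, ZMod 3) := (T, T)
  let v : SL(2, ZMod 3) × SL(2, ZMod 3) := (L⁻¹, L)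
  let π := QuotientGroup.mk' (zpowers (-1 : SL(2, ZMod 3) × SL(2, ZMod 3)))
  have hu : π u ^ 3 = 1 := by rw [← map_pow, show u ^ 3 = 1 by decide, map_one]
  have hv : π v ^ 3 = 1 := by rw [← map_pow, show v ^ 3 = 1 by decide, map_one]
  have huv : ((π u)⁻¹ * (π v)⁻¹ * π u * π v) ^ 2 = 1 := by
    simp only [← map_inv, ← map_mul, ← map_pow]
    rw [show (u⁻¹ * v⁻¹ * u * v) ^ 2 = -1 by decide]
    exact (QuotientGroup.eq_one_iff _).mpr (mem_zpowers _)
  have hz : ⁅⁅u⁻¹, v⁻¹⁆, ⁅u, v⁆⁆ = (-1, 1) := by decide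
  intro h
  have hπ : π ⁅⁅u⁻¹, v⁻¹⁆, ⁅u, v⁆⁆ = 1 := by
    simpa only [map_commutatorElement, map_inv, lift_x, lift_y, map_one] using
      congrArg (lift hu hv huv) h
  rw [hz] at hπ
  exact neg_one_one_notMem_zpowers_neg_one (by decide) ((QuotientGroup.eq_one_iff _).mp hπ)

theorem commutingDihedralPairs :
    CommutingDihedralPairs ⁅x⁻¹, y⁻¹⁆ ⁅x, y⁆ ⁅x, y⁻¹⁆ ⁅x⁻¹, y⁆ :=
  commutingDihedralPairs_commutatorElement x_pow_three y_pow_three commutator_inv_sq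

theorem commutator_eq_closure :
    commutator K19 = closure {⁅x⁻¹, y⁻¹⁆, ⁅x, y⁆, ⁅x, y⁻¹⁆, ⁅x⁻¹, y⁆} := by
  rw [commutator_eq_commutator_zpowers closure_x_y,
    commutator_zpowers_eq_closure x_pow_three y_pow_three]

theorem card_commutator : Nat.card (commutator K19) = 32 := by
  rw [commutator_eq_closure, commutingDihedralPairs.card_closure commutatorElement_ne_one]

theorem derivedSeries_two : derivedSeries K19 2 = zpowers ⁅⁅x⁻¹, y⁻¹⁆, ⁅x, y⁆⁆ := by
  rw [derivedSeries_succ, derivedSeries_one, commutator_eq_closure,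
    commutingDihedralPairs.commutator_closure_eq_zpowers]

theorem card_derivedSeries_two : Nat.card (derivedSeries K19 2) = 2 := by
  rw [derivedSeries_two, Nat.card_zpowers,
    orderOf_eq_prime commutingDihedralPairs.commutator_sq commutatorElement_ne_one]

/-- The isomorphism `K/K' ≅ C₃ × C₃` sending the classes of `x` and `y` to the generators of the
two factors. -/
def abelianizationEquiv :
    Abelianization K19 ≃* Multiplicative (ZMod 3) × Multiplicative (ZMod 3) :=
  MonoidHom.toMulEquiv
    (Abelianization.lift (lift (u := (.ofAdd 1, 1)) (v := (1, .ofAdd 1))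
      (by decide) (by decide) (by decide)))
    ((zmodPowersHom 3 (Abelianization.of x) (by rw [← map_pow, x_pow_three, map_one])).coprod
      (zmodPowersHom 3 (Abelianization.of y) (by rw [← map_pow, y_pow_three, map_one])))
    (by
      refine Abelianization.hom_ext _ _ (hom_ext ?_ ?_) <;>
        simp [lift_x, lift_y, zmodPowersHom_ofAdd_one])
    (by
      rw [MonoidHom.comp_coprod, ← MonoidHom.coprod_inl_inr]
      congr 1 <;> refine multiplicativeZMod_hom_ext ?_ <;>
        simp [lift_x, lift_y, zmodPowersHom_ofAdd_one])

theorem card : Nat.card K19 = 288 := by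
  have card_abelianization : Nat.card (Abelianization K19) = 9 := by
    rw [Nat.card_congr abelianizationEquiv.toEquiv, Nat.card_prod]
    simp
  rw [card_eq_card_quotient_mul_card_subgroup (commutator K19), card_commutator]
  exact congrArg (· * 32) card_abelianization

end K19

/-- the group `K = ⟨x, y ∣ x³ = y³ = [x,y]² = 1⟩` has order `288`, its
abelianization `K/K'` is isomorphic to `C_3 × C_3`, and its second derived subgroup
`K''` is isomorphic to `C_2`. -/
theorem stmt19 :
    Nat.card K19 = 288 ∧
    Nonempty (Abelianization K19 ≃* Multiplicative (ZMod 3) × Multiplicative (ZMod 3)) ∧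
    Nonempty ((derivedSeries K19 2) ≃* Multiplicative (ZMod 2)) := by
  have card_zmod_two : Nat.card (Multiplicative (ZMod 2)) = 2 := by simp
  exact ⟨K19.card, ⟨K19.abelianizationEquiv⟩,
    ⟨mulEquivOfPrimeCardEq (p := 2) K19.card_derivedSeries_two card_zmod_two⟩⟩
end
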